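/- Let Γ be a Shilla distance-regular graph with b(Γ) = b and smallest eigenvalue θ₃. Then θ₃ < -b² + 2 if and only if b = 2. -/

import Mathlib

open Finset SimpleGraph

/-- `G` is a distance-regular graph with diameter `D` and intersection numbers
`b i`, `c i`, `a i` (so valency `k = b 0` and `a i = k - b i - c i`). -/
structure IsDRG {V : Type*} [Fintype V] (G : SimpleGraph V) (D : ℕ)
    (b c a : ℕ → ℕ) : Prop where
  connected : G.Connected
  le_diam : ∀ x y : V, G.dist x y ≤ D
  exists_diam : ∃ x y : V, G.dist x y = D
  card_b : ∀ i, i ≤ D → ∀ x y : V, G.dist x y = i →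
      Nat.card {z : V | G.Adj y z ∧ G.dist x z = i + 1} = b i
  card_c : ∀ i, i ≤ D → ∀ x y : V, G.dist x y = i →
      Nat.card {z : V | G.Adj y z ∧ G.dist x z = i - 1} = c i
  card_a : ∀ i, i ≤ D → ∀ x y : V, G.dist x y = i →
      Nat.card {z : V | G.Adj y z ∧ G.dist x z = i} = a i

/-- `θ` is an eigenvalue of the adjacency matrix of `G`. -/
def IsEig {V : Type*} [Fintype V] [DecidableEq V] (G : SimpleGraph V)
    [DecidableRel G.Adj] (θ : ℝ) : Prop :=
  ∃ v : V → ℝ, v ≠ 0 ∧ (G.adjMatrix ℝ).mulVec v = θ • v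

/-- `θ` is the second largest eigenvalue of `G` (`k` being the largest). -/
def IsSecondLargestEig {V : Type*} [Fintype V] [DecidableEq V] (G : SimpleGraph V)
    [DecidableRel G.Adj] (k θ : ℝ) : Prop :=
  IsEig G θ ∧ θ < k ∧ ∀ η : ℝ, IsEig G η → η ≠ k → η ≤ θ

/-- `θ` is the smallest eigenvalue of `G`. -/
def IsSmallestEig {V : Type*} [Fintype V] [DecidableEq V] (G : SimpleGraph V)
    [DecidableRel G.Adj] (θ : ℝ) : Prop :=
  IsEig G θ ∧ ∀ η : ℝ, IsEig G η → θ ≤ η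

/-- The multiplicity of `θ` as an eigenvalue of the adjacency matrix of `G`. -/
noncomputable def eigMult {V : Type*} [Fintype V] [DecidableEq V] (G : SimpleGraph V)
    [DecidableRel G.Adj] (θ : ℝ) : ℕ :=
  Module.finrank ℝ ↥(Module.End.eigenspace (Matrix.toLin' (G.adjMatrix ℝ)) θ)

/-- A Shilla distance-regular graph: diameter `3` and second largest eigenvalue `a 3`. -/
structure IsShilla {V : Type*} [Fintype V] [DecidableEq V] (G : SimpleGraph V)
    [DecidableRel G.Adj] (b c a : ℕ → ℕ) : Prop where
  drg : IsDRG G 3 b c a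
  second : IsSecondLargestEig G (b 0) ((a 3 : ℝ))

/-- The local inequality of a Shilla graph with smallest eigenvalue `1 - b ^ 2` is violated. -/
lemma local_form_neg {b t a : ℝ} (hb : 3 ≤ b) (ht : 1 ≤ t)
    (ha : t * ((b^2-b-1)^2 + b^2 - 2) - b^2 + 1 ≤ a) :
    b * a * (a - b) - (b^2-1) * (a-b) * (a - b - 1 + 4) + 2 * (b * a - (b^2-1))
      + (b^2 - 2) * (b^2-1 + b*a) * (t * (b^2-b-1) - 1) < 0 := by
  obtain ⟨B, rfl⟩ : ∃ B, b = B + 3 := ⟨b - 3, by ring⟩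
  obtain ⟨T, rfl⟩ : ∃ B, t = B + 1 := ⟨t - 1, by ring⟩
  obtain ⟨R, rfl⟩ : ∃ R, a = (T+1) * (((B+3)^2-(B+3)-1)^2 + (B+3)^2 - 2) - (B+3)^2 + 1 + R :=
    ⟨_, (add_sub_cancel _ _).symm⟩
  have hB : 0 ≤ B := by linarith
  have hT : 0 ≤ T := by linarith
  have hR : 0 ≤ R := by linarith
  rw [← neg_pos]
  ring_nf
  positivity

lemma shilla_irrational_bounds {b a c2 S δ y : ℝ} (hb : 3 ≤ b) (hab : b ≤ a) (hc2 : 0 < c2)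
    (hS : 0 < S) (hδ : 1 ≤ δ) (hSd : S = a + b - δ) (hy : b^2-b-2 < y) (hyδ : y * (y + δ) = (b-1) * c2)
    (hK : b * (b-1) * c2 ≤ (b * (b-1) - y) * S)
    (hI : δ * (S^2 + (b-1)*a*S + (b-1)*c2) = 2*(b-1)*c2*(S+b*a+b)) :
    b * (b * a + b - 1) < 4 * (b+1) * a + 8 * b - 4 * δ ∧
      (2 ≤ δ → b * 2 * (b * a + b - 2) < 4 * (b+1) * a + 8 * b - 4 * δ) ∧
      (b^2-b-2)^2 < (b-1)*c2 ∧ b * (b-1) * c2 < 2 * S := by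
  have hy0 : 0 < b^2-b-2 := by nlinarith
  have h1 : b * (b-1) * c2 < 2 * S := by nlinarith
  have h2 : (b^2-b-2)^2 < (b-1)*c2 := by nlinarith
  have h3 : b * (δ * (S + (b-1) * a)) < 4 * (S + b * a + b) := by
    have e1 : δ * (S * (S + (b-1)*a)) ≤ 2*(b-1)*c2*(S+b*a+b) := by
      rw [← hI]
      have : 0 ≤ δ * ((b-1) * c2) :=
        mul_nonneg (by linarith) (mul_nonneg (by linarith) hc2.le)
      linarith
    have e2 : 0 < S + b * a + b := by nlinarith
    have e3 : b * (2*(b-1)*c2*(S+b*a+b)) < 4 * S * (S + b * a + b) := by nlinarith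
    have e4 : b * (δ * (S * (S + (b-1)*a))) < 4 * S * (S + b * a + b) :=
      lt_of_le_of_lt (mul_le_mul_of_nonneg_left e1 (by linarith)) e3
    nlinarith
  have h4 : b * (δ * (b * a + b - δ)) < 4 * (b+1) * a + 8 * b - 4 * δ := by
    subst hSd; linarith
  have hba : 3 * a ≤ b * a := mul_le_mul_of_nonneg_right hb (by linarith)
  refine ⟨lt_of_le_of_lt (mul_le_mul_of_nonneg_left ?_ (by linarith)) h4,
    fun h => lt_of_le_of_lt ?_ h4, h2, h1⟩
  · nlinarith [mul_nonneg (sub_nonneg.2 hδ) (show 0 ≤ b*a + b - 1 - δ by linarith)]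
  · rw [mul_assoc]
    apply mul_le_mul_of_nonneg_left _ (by linarith)
    nlinarith [mul_nonneg (sub_nonneg.2 h) (show 0 ≤ b*a + b - 2 - δ by linarith)]

/-- The parameters of a Shilla graph with `3 ≤ b` whose smallest eigenvalue `- y - b` is an
irrational number below `- b ^ 2 + 2` would be inconsistent. -/
lemma shilla_irrational_contradiction {b a c2 S δ : ℤ} {y : ℝ} (hb : 3 ≤ b) (hab : b ≤ a)
    (hc2 : 0 < c2) (hS : 0 < S)
    (hSd : S = a + b - δ) (hy : (b:ℝ)^2-b-2 < y) (hyδ : y * (y + δ) = (b-1) * c2)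
    (hK : (b:ℝ) * (b-1) * c2 ≤ (b * (b-1) - y) * S)
    (hI : δ * (S^2 + (b-1)*a*S + (b-1)*c2) = 2*(b-1)*c2*(S+b*a+b)) : False := by
  have hδ : 0 < δ := by
    have h1 : 0 < 2*(b-1)*c2*(S+b*a+b) := by
      have : 0 < b - 1 := by linarith
      have : 0 < S + b * a + b := by nlinarith
      positivity
    have h2 : 0 < S^2 + (b-1)*a*S + (b-1)*c2 := by
      have : 0 < b - 1 := by linarith
      have : 0 < a := by linarith
      positivity
    rw [← hI] at h1
    exact pos_of_mul_pos_left h1 h2.le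
  obtain ⟨h1, h2, h3, h4⟩ := shilla_irrational_bounds (b := b) (a := a) (c2 := c2) (S := S)
    (δ := δ) (y := y)
    (by exact_mod_cast hb) (by exact_mod_cast hab) (by exact_mod_cast hc2) (by exact_mod_cast hS)
    (by exact_mod_cast hδ) (by exact_mod_cast hSd) hy hyδ hK (by exact_mod_cast hI)
  have g1 : b * (b * a + b - 1) < 4 * (b+1) * a + 8 * b - 4 * δ := by exact_mod_cast h1
  have g2 : 2 ≤ δ → b * 2 * (b * a + b - 2) < 4 * (b+1) * a + 8 * b - 4 * δ :=
    fun h => by exact_mod_cast h2 (by exact_mod_cast h)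
  have g3 : (b^2-b-2)^2 < (b-1)*c2 := by exact_mod_cast h3
  have g4 : b * (b-1) * c2 < 2 * S := by exact_mod_cast h4
  clear h1 h2 h3 h4 hy hyδ hK
  by_cases h5 : 5 ≤ b
  · by_cases h6 : 6 ≤ b
    · have h7 : 8 ≤ b ^ 2 - 4 * b - 4 := by nlinarith
      have h8 := mul_le_mul_of_nonneg_right h7 (show 0 ≤ a by linarith)
      nlinarith
    · obtain rfl : b = 5 := by linarith
      linarith
  · have hb' : b = 3 ∨ b = 4 := by omega
    by_cases h1 : 2 ≤ δ
    · specialize g2 h1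
      rcases hb' with rfl | rfl <;> linarith
    · obtain rfl : δ = 1 := by linarith
      subst hSd
      rcases hb' with rfl | rfl
      · have : (8 * a + 9) ∣ 77 := ⟨24 * a + 37 - 128 * c2, by linear_combination -64 * hI⟩
        have := Int.le_of_dvd (by norm_num) this
        linarith
      · have : (10 * a + 13) ∣ 374 := ⟨40 * a + 98 - 300 * c2, by linear_combination -100 * hI⟩
        have := Int.le_of_dvd (by norm_num) this
        linarith

section

variable {V : Type*} [Fintype V] {G : SimpleGraph V} {D : ℕ} {b c a : ℕ → ℕ}

lemma natCast_card_setOf_eq_sum (p : V → Prop) [DecidablePred p] :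
    (Nat.card {z : V | p z} : ℝ) = ∑ z, if p z then 1 else 0 := by
  rw [Finset.sum_boole, Set.coe_ofPred, Nat.card_eq_fintype_card, Fintype.card_subtype]

/-- Summing a function of the distance to `x` over the neighbours of `y`. -/
lemma IsDRG.sum_neighbors [DecidableRel G.Adj] (h : IsDRG G D b c a) (f : ℕ → ℝ) (x y : V) :
    ∑ z, (if G.Adj y z then f (G.dist x z) else 0) =
      c (G.dist x y) * f (G.dist x y - 1) + a (G.dist x y) * f (G.dist x y)
        + b (G.dist x y) * f (G.dist x y + 1) := by
  classical
  have hD := h.le_diam x y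
  rw [← h.card_c _ hD x y rfl, ← h.card_a _ hD x y rfl, ← h.card_b _ hD x y rfl]
  simp only [natCast_card_setOf_eq_sum, Finset.sum_mul, ← Finset.sum_add_distrib]
  refine Finset.sum_congr rfl fun z _ => ?_
  by_cases hyz : G.Adj y z
  · have hz := hyz.diff_dist_adj (u := x)
    rcases Nat.eq_zero_or_pos (G.dist x y) with h0 | h0
    · obtain rfl : x = y := h.connected.dist_eq_zero_iff.1 h0
      simp [hyz, SimpleGraph.dist_eq_one_iff_adj.2 hyz]
    · rcases hz with hz | hz | hz
      · have h1 : G.dist x y ≠ G.dist x y - 1 := by omega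
        simp [hyz, hz, h1]
      · have h1 : G.dist x y + 1 ≠ G.dist x y - 1 := by omega
        simp [hyz, hz, h1]
      · have h1 : G.dist x y - 1 ≠ G.dist x y := by omega
        have h2 : G.dist x y - 1 ≠ G.dist x y + 1 := by omega
        simp [hyz, hz, h1, h2]
  · simp [hyz]

lemma IsDRG.c_zero (h : IsDRG G D b c a) : c 0 = 0 := by
  obtain ⟨x, -⟩ := h.exists_diam
  rw [← h.card_c 0 (Nat.zero_le _) x x SimpleGraph.dist_self, Nat.card_eq_zero]
  refine Or.inl ⟨?_⟩
  rintro ⟨z, hz, h0⟩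
  have := SimpleGraph.dist_eq_one_iff_adj.2 hz
  omega

lemma IsDRG.a_zero (h : IsDRG G D b c a) : a 0 = 0 := by
  obtain ⟨x, -⟩ := h.exists_diam
  rw [← h.card_a 0 (Nat.zero_le _) x x SimpleGraph.dist_self, Nat.card_eq_zero]
  refine Or.inl ⟨?_⟩
  rintro ⟨z, hz, h0⟩
  have := SimpleGraph.dist_eq_one_iff_adj.2 hz
  omega

lemma IsDRG.b_diam (h : IsDRG G D b c a) : b D = 0 := by
  obtain ⟨x, y, hxy⟩ := h.exists_diam
  rw [← h.card_b D le_rfl x y hxy, Nat.card_eq_zero]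
  refine Or.inl ⟨?_⟩
  rintro ⟨z, -, h0⟩
  have := h.le_diam x z
  omega

omit [Fintype V] in
/-- Predecessors on geodesics. -/
lemma SimpleGraph.Connected.exists_adj_dist_eq (h : G.Connected) {x y : V} {n : ℕ}
    (hxy : G.dist x y = n + 1) : ∃ z, G.Adj z y ∧ G.dist x z = n := by
  obtain ⟨p, hp⟩ := h.exists_walk_length_eq_dist y x
  rw [SimpleGraph.dist_comm, hxy] at hp
  cases p with
  | nil => simp at hp
  | @cons _ z _ hz p =>
    refine ⟨z, hz.symm, ?_⟩
    have h1 := SimpleGraph.dist_le p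
    have h2 := hz.diff_dist_adj (u := x)
    rw [SimpleGraph.Walk.length_cons] at hp
    rw [SimpleGraph.dist_comm] at h1
    omega

lemma IsDRG.exists_dist_eq (h : IsDRG G D b c a) {i : ℕ} (hi : i ≤ D) :
    ∃ x y, G.dist x y = i := by
  induction hi using Nat.decreasingInduction with
  | self => exact h.exists_diam
  | of_succ k _ ih =>
    obtain ⟨x, y, hxy⟩ := ih
    obtain ⟨z, -, hz⟩ := h.connected.exists_adj_dist_eq hxy
    exact ⟨x, z, hz⟩

lemma IsDRG.c_pos (h : IsDRG G D b c a) {i : ℕ} (hi : i + 1 ≤ D) : 0 < c (i + 1) := by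
  obtain ⟨x, y, hxy⟩ := h.exists_dist_eq hi
  obtain ⟨z, hzy, hz⟩ := h.connected.exists_adj_dist_eq hxy
  rw [← h.card_c (i + 1) hi x y hxy]
  have : Nonempty {z : V | G.Adj y z ∧ G.dist x z = i + 1 - 1} := ⟨⟨z, hzy.symm, by simpa using hz⟩⟩
  exact Nat.card_pos

lemma IsDRG.b_pos (h : IsDRG G D b c a) {i : ℕ} (hi : i + 1 ≤ D) : 0 < b i := by
  obtain ⟨x, y, hxy⟩ := h.exists_dist_eq hi
  obtain ⟨z, hzy, hz⟩ := h.connected.exists_adj_dist_eq hxy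
  rw [← h.card_b i (by omega) x z hz]
  have : Nonempty {w : V | G.Adj z w ∧ G.dist x w = i + 1} := ⟨⟨y, hzy, hxy⟩⟩
  exact Nat.card_pos

lemma IsDRG.c_one (h : IsDRG G D b c a) (hD : 1 ≤ D) : c 1 = 1 := by
  obtain ⟨x, y, hxy⟩ := h.exists_dist_eq hD
  rw [← h.card_c 1 hD x y hxy, Nat.card_eq_one_iff_exists]
  refine ⟨⟨x, (SimpleGraph.dist_eq_one_iff_adj.1 hxy).symm, by simp⟩, ?_⟩
  rintro ⟨z, -, hz⟩
  exact Subtype.ext (h.connected.dist_eq_zero_iff.1 (by simpa using hz)).symm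

lemma IsDRG.add_add_eq (h : IsDRG G D b c a) {i : ℕ} (hi : i ≤ D) :
    (c i + a i + b i : ℝ) = b 0 := by
  classical
  obtain ⟨x, y, rfl⟩ := h.exists_dist_eq hi
  have h1 := h.sum_neighbors (fun _ => 1) x y
  have h2 := h.sum_neighbors (fun _ => 1) y y
  rw [h1] at h2
  simpa [h.c_zero, h.a_zero] using h2

/-- The sum of `w` over the sphere of radius `i` around `x`. -/
noncomputable def sphereSum (G : SimpleGraph V) (w : V → ℝ) (x : V) (i : ℕ) : ℝ :=
  ∑ y, if G.dist x y = i then w y else 0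

lemma IsDRG.sum_dist_mul_eq (h : IsDRG G 3 b c a) (w : V → ℝ) (f : ℕ → ℝ) (x : V) :
    ∑ y, f (G.dist x y) * w y =
      f 0 * sphereSum G w x 0 + f 1 * sphereSum G w x 1
        + f 2 * sphereSum G w x 2 + f 3 * sphereSum G w x 3 := by
  simp only [sphereSum, Finset.mul_sum, ← Finset.sum_add_distrib]
  refine Finset.sum_congr rfl fun y _ => ?_
  have := h.le_diam x y
  interval_cases G.dist x y <;> simp

lemma IsDRG.sphereSum_zero (h : IsDRG G D b c a) (w : V → ℝ) (x : V) :
    sphereSum G w x 0 = w x := by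
  classical
  simp [sphereSum, h.connected.dist_eq_zero_iff]

variable [DecidableRel G.Adj]

/-- `w` is an eigenfunction (possibly zero) of the adjacency operator. -/
def IsEigenfun (G : SimpleGraph V) [DecidableRel G.Adj] (θ : ℝ) (w : V → ℝ) : Prop :=
  ∀ y, ∑ z, (if G.Adj y z then w z else 0) = θ * w y

lemma IsDRG.sum_dist_mul_eigenfun (h : IsDRG G D b c a) {θ : ℝ} {w : V → ℝ}
    (hw : IsEigenfun G θ w) (f : ℕ → ℝ) (x : V) :
    ∑ y, (c (G.dist x y) * f (G.dist x y - 1) + a (G.dist x y) * f (G.dist x y)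
        + b (G.dist x y) * f (G.dist x y + 1)) * w y = θ * ∑ y, f (G.dist x y) * w y := by
  simp_rw [← h.sum_neighbors f, Finset.sum_mul, Finset.mul_sum]
  rw [Finset.sum_comm]
  refine Finset.sum_congr rfl fun z _ => ?_
  rw [mul_left_comm, ← hw z, Finset.mul_sum]
  refine Finset.sum_congr rfl fun y _ => ?_
  simp [G.adj_comm y z]

lemma IsDRG.sphereSum_recurrence (h : IsDRG G 3 b c a) {θ : ℝ} {w : V → ℝ}
    (hw : IsEigenfun G θ w) (x : V) :
    sphereSum G w x 1 = θ * w x ∧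
    b 0 * w x + a 1 * sphereSum G w x 1 + c 2 * sphereSum G w x 2 = θ * sphereSum G w x 1 ∧
    b 1 * sphereSum G w x 1 + a 2 * sphereSum G w x 2 + c 3 * sphereSum G w x 3
      = θ * sphereSum G w x 2 ∧
    b 2 * sphereSum G w x 2 + a 3 * sphereSum G w x 3 = θ * sphereSum G w x 3 := by
  have key := fun j : ℕ => h.sum_dist_mul_eigenfun hw (fun i => if i = j then 1 else 0) x
  have e : ∀ j : ℕ, _ := fun j => (h.sum_dist_mul_eq w
    (fun i => c i * (if i - 1 = j then 1 else 0) + a i * (if i = j then 1 else 0)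
      + b i * (if i + 1 = j then 1 else 0)) x).symm.trans (key j)
  have e' := fun j => (e j).trans
    (congrArg (θ * ·) (h.sum_dist_mul_eq w (fun i => if i = j then 1 else 0) x))
  have e0 := e' 0
  have e1 := e' 1
  have e2 := e' 2
  have e3 := e' 3
  simp [h.sphereSum_zero, h.c_zero, h.a_zero, h.c_one] at e0 e1 e2 e3
  exact ⟨e0, e1, e2, e3⟩

end

/-- A real matrix with `E * E = l • E` has trace `l` times a natural number. -/
lemma Matrix.exists_trace_eq_natCast_mul {V : Type*} [Fintype V] [DecidableEq V]
    (E : Matrix V V ℝ) {l : ℝ} (hl : l ≠ 0) (hE : E * E = l • E) : ∃ m : ℕ, E.trace = m * l := by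
  have hI : IsIdempotentElem (Matrix.toLin' (l⁻¹ • E)) := by
    rw [IsIdempotentElem, Module.End.mul_eq_comp, ← Matrix.toLin'_mul, smul_mul_smul_comm, hE,
      smul_smul, mul_assoc, inv_mul_cancel₀ hl, mul_one]
  refine ⟨Module.finrank ℝ (LinearMap.range (Matrix.toLin' (l⁻¹ • E))), ?_⟩
  rw [← (LinearMap.IsIdempotentElem.isProj_range _ hI).trace, Matrix.trace_toLin'_eq,
    Matrix.trace_smul, smul_eq_mul]
  field_simp

section

variable {V : Type*} [Fintype V] {E : V → V → ℝ} {l : ℝ}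

lemma quadForm_nonneg {ι : Type*} [Fintype ι] (F : V → ι → ℝ) (w : V → ℝ) :
    0 ≤ ∑ x, ∑ y, w x * w y * ∑ p, F x p * F y p := by
  have h : ∑ x, ∑ y, w x * w y * ∑ p, F x p * F y p = ∑ p, (∑ x, w x * F x p) ^ 2 := by
    simp_rw [sq, Finset.sum_mul_sum, Finset.mul_sum]
    symm
    rw [Finset.sum_comm]
    refine Finset.sum_congr rfl fun x _ => ?_
    rw [Finset.sum_comm]
    exact Finset.sum_congr rfl fun y _ => Finset.sum_congr rfl fun z _ => by ring
  exact h ▸ Finset.sum_nonneg fun z _ => sq_nonneg _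

lemma quadForm_nonneg_of_gram (hl : 0 < l) (hE : ∀ x y, ∑ z, E x z * E y z = l * E x y)
    (w : V → ℝ) : 0 ≤ ∑ x, ∑ y, w x * w y * E x y := by
  have h := quadForm_nonneg E w
  simp_rw [hE, mul_left_comm _ l, ← Finset.mul_sum] at h
  exact nonneg_of_mul_nonneg_right h hl

/-- The Hadamard square of a Gram matrix is positive semidefinite. -/
lemma quadForm_sq_nonneg_of_gram (hl : 0 < l) (hE : ∀ x y, ∑ z, E x z * E y z = l * E x y)
    (w : V → ℝ) : 0 ≤ ∑ x, ∑ y, w x * w y * E x y ^ 2 := by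
  have h := quadForm_nonneg (fun x (p : V × V) => E x p.1 * E x p.2) w
  have h2 : ∀ x y, ∑ p : V × V, E x p.1 * E x p.2 * (E y p.1 * E y p.2) = l ^ 2 * E x y ^ 2 := by
    intro x y
    rw [← mul_pow, ← hE, sq, Finset.sum_mul_sum, Fintype.sum_prod_type]
    exact Finset.sum_congr rfl fun z _ => Finset.sum_congr rfl fun z _ => by ring
  simp_rw [h2, mul_left_comm _ (l ^ 2), ← Finset.mul_sum] at h
  exact nonneg_of_mul_nonneg_right h (by positivity)

end

section

variable {V : Type*} [Fintype V] [DecidableEq V] {G : SimpleGraph V} [DecidableRel G.Adj]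
  {b c a : ℕ → ℕ} {β : ℕ} {θ : ℝ}

lemma isEig_iff_exists_isEigenfun : IsEig G θ ↔ ∃ w : V → ℝ, w ≠ 0 ∧ IsEigenfun G θ w := by
  refine exists_congr fun w => and_congr_right fun _ => ?_
  rw [funext_iff]
  exact forall_congr' fun y => by
    simp [Matrix.mulVec, dotProduct, SimpleGraph.adjMatrix_apply]

lemma IsShilla.valency (hG : IsShilla G b c a) (hβ : a 3 = a 1 + β) :
    (b 0 : ℝ) = β * a 3 := by
  have h := hG.drg
  obtain ⟨w, hw0, hw⟩ := isEig_iff_exists_isEigenfun.1 hG.second.1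
  obtain ⟨x, hx⟩ := Function.ne_iff.1 hw0
  obtain ⟨e1, e2, -, e4⟩ := h.sphereSum_recurrence hw x
  have hb2 : (b 2 : ℝ) ≠ 0 := by exact_mod_cast (h.b_pos (i := 2) le_rfl).ne'
  have h2 : sphereSum G w x 2 = 0 := by
    have : (b 2 : ℝ) * sphereSum G w x 2 = 0 := by linarith
    simpa [hb2] using this
  have hβ' : (a 3 : ℝ) = a 1 + β := by exact_mod_cast hβ
  rw [h2, e1] at e2
  have : ((b 0 : ℝ) - β * a 3) * w x = 0 := by
    rw [show (β : ℝ) = a 3 - a 1 by linarith]; linarith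
  rcases mul_eq_zero.1 this with h0 | h0
  · linarith
  · exact absurd h0 hx

lemma IsShilla.a_three_pos (hG : IsShilla G b c a) (hβ : a 3 = a 1 + β) : (0 : ℝ) < a 3 := by
  have h1 := hG.valency hβ
  have h2 : (0 : ℝ) < b 0 := by exact_mod_cast hG.drg.b_pos (i := 0) (by norm_num)
  rcases Nat.eq_zero_or_pos (a 3) with h0 | h0
  · simp [h0] at h1
    simp [h1] at h2
  · exact_mod_cast h0

lemma IsShilla.two_le (hG : IsShilla G b c a) (hβ : a 3 = a 1 + β) : 2 ≤ β := by
  have h1 := hG.valency hβ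
  have h2 := hG.second.2.1
  have h3 := hG.a_three_pos hβ
  by_contra! h
  have : (β : ℝ) ≤ 1 := by exact_mod_cast Nat.lt_succ_iff.1 h
  nlinarith

lemma IsShilla.params (hG : IsShilla G b c a) (hβ : a 3 = a 1 + β) :
    (a 1 : ℝ) = a 3 - β ∧ (b 1 : ℝ) = (β - 1) * (a 3 + 1) ∧ (c 3 : ℝ) = (β - 1) * a 3 ∧
      (a 2 : ℝ) = β * a 3 - b 2 - c 2 := by
  have h := hG.drg
  have hk := hG.valency hβ
  have hβ' : (a 3 : ℝ) = a 1 + β := by exact_mod_cast hβ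
  have h1 := h.add_add_eq (i := 1) (by norm_num)
  have h2 := h.add_add_eq (i := 2) (by norm_num)
  have h3 := h.add_add_eq (i := 3) le_rfl
  rw [h.c_one (by norm_num)] at h1
  rw [h.b_diam] at h3
  push_cast at h1 h3
  refine ⟨?_, ?_, ?_, ?_⟩ <;> linarith

/-- The quadratic whose roots are the two eigenvalues of a Shilla graph besides `k` and `a 3`. -/
def shillaQuad (β A b2 c2 θ : ℝ) : ℝ := (θ - A) * (θ + β) + (θ + β) * b2 + (θ + 1) * c2

lemma IsShilla.sphereSum_eq (hG : IsShilla G b c a) (hβ : a 3 = a 1 + β) {w : V → ℝ}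
    (hw : IsEigenfun G θ w) (x : V) :
    sphereSum G w x 1 = θ * w x ∧
      sphereSum G w x 2 = (θ - a 3) * (θ + β) / c 2 * w x := by
  obtain ⟨e1, e2, e3, e4⟩ := hG.drg.sphereSum_recurrence hw x
  obtain ⟨p1, p2, p3, p4⟩ := hG.params hβ
  have hc2 : (0 : ℝ) < c 2 := by exact_mod_cast hG.drg.c_pos (i := 1) (by norm_num)
  refine ⟨e1, ?_⟩
  rw [e1, p1, hG.valency hβ] at e2
  field_simp
  linarith

lemma IsShilla.sphereSum_three (hG : IsShilla G b c a) (hβ : a 3 = a 1 + β) {w : V → ℝ}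
    (hw : IsEigenfun G θ w) (hθ : θ ≠ a 3) (x : V) :
    sphereSum G w x 3 = b 2 * (θ + β) / c 2 * w x := by
  obtain ⟨e1, e2, e3, e4⟩ := hG.drg.sphereSum_recurrence hw x
  have hc2 : (0 : ℝ) < c 2 := by exact_mod_cast hG.drg.c_pos (i := 1) (by norm_num)
  rw [(hG.sphereSum_eq hβ hw x).2] at e4
  have : θ - a 3 ≠ 0 := sub_ne_zero.2 hθ
  have e5 : (θ - a 3) * sphereSum G w x 3 = (θ - a 3) * (b 2 * (θ + β) / c 2 * w x) := by
    rw [← sub_eq_zero]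
    linear_combination -e4
  exact mul_left_cancel₀ this e5

lemma IsShilla.sphereSum_three_a (hG : IsShilla G b c a) (hβ : a 3 = a 1 + β) {w : V → ℝ}
    (hw : IsEigenfun G (a 3) w) (x : V) :
    sphereSum G w x 2 = 0 ∧ sphereSum G w x 3 = - (a 3 + 1) * w x := by
  obtain ⟨e1, e2, e3, e4⟩ := hG.drg.sphereSum_recurrence hw x
  obtain ⟨p1, p2, p3, p4⟩ := hG.params hβ
  have h2 : sphereSum G w x 2 = 0 := by simpa using (hG.sphereSum_eq hβ hw x).2
  have hA := hG.a_three_pos hβ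
  have hB : (2 : ℝ) ≤ β := by exact_mod_cast hG.two_le hβ
  refine ⟨h2, ?_⟩
  rw [h2, e1, p2, p3] at e3
  have : ((β : ℝ) - 1) * a 3 ≠ 0 := mul_ne_zero (by linarith) hA.ne'
  refine mul_left_cancel₀ this ?_
  linarith

lemma IsShilla.shillaQuad_eq_zero (hG : IsShilla G b c a) (hβ : a 3 = a 1 + β)
    (hθ : IsEig G θ) (hk : θ ≠ b 0) (ha : θ ≠ a 3) : shillaQuad β (a 3) (b 2) (c 2) θ = 0 := by
  obtain ⟨w, hw0, hw⟩ := isEig_iff_exists_isEigenfun.1 hθ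
  obtain ⟨x, hx⟩ := Function.ne_iff.1 hw0
  obtain ⟨e1, e2, e3, e4⟩ := hG.drg.sphereSum_recurrence hw x
  obtain ⟨p1, p2, p3, p4⟩ := hG.params hβ
  have hc2 : (0 : ℝ) < c 2 := by exact_mod_cast hG.drg.c_pos (i := 1) (by norm_num)
  rw [hG.sphereSum_three hβ hw ha, (hG.sphereSum_eq hβ hw x).2, e1, p2, p3, p4] at e3
  rw [hG.valency hβ] at hk
  refine mul_left_cancel₀ (mul_ne_zero (sub_ne_zero.2 hk) hx) ?_
  rw [shillaQuad]
  field_simp at e3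
  linear_combination -e3

/-- The standard sequence of a Shilla graph for a root of its quadratic. -/
noncomputable def shillaSeq (β A θ : ℝ) : ℕ → ℝ
  | 0 => 1
  | 1 => θ / (β * A)
  | 2 => (θ - A) * (θ + β) / (A * β * (β - 1) * (A + 1))
  | _ => (θ + β) / (β * (A + 1))

/-- The standard sequence of a Shilla graph for the eigenvalue `a 3`. -/
noncomputable def shillaSeqA (β b2 c2 : ℝ) : ℕ → ℝ
  | 0 => 1
  | 1 => 1 / β
  | 2 => 0
  | _ => - c2 / (β * b2)

omit [DecidableEq V] in
lemma IsDRG.isEigenfun_dist (h : IsDRG G 3 b c a) (u : ℕ → ℝ) (h0 : b 0 * u 1 = θ * u 0)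
    (h1 : u 0 + a 1 * u 1 + b 1 * u 2 = θ * u 1)
    (h2 : c 2 * u 1 + a 2 * u 2 + b 2 * u 3 = θ * u 2)
    (h3 : c 3 * u 2 + a 3 * u 3 = θ * u 3) (x : V) :
    IsEigenfun G θ (fun z => u (G.dist x z)) := by
  intro y
  change _ = θ * u (G.dist x y)
  rw [h.sum_neighbors u x y]
  have := h.le_diam x y
  interval_cases G.dist x y <;> simp [h.c_zero, h.a_zero, h.b_diam, h.c_one, *]

lemma IsShilla.isEigenfun_shillaSeq (hG : IsShilla G b c a) (hβ : a 3 = a 1 + β)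
    (hP : shillaQuad β (a 3) (b 2) (c 2) θ = 0) (x : V) :
    IsEigenfun G θ (fun z => shillaSeq β (a 3) θ (G.dist x z)) := by
  obtain ⟨p1, p2, p3, p4⟩ := hG.params hβ
  have hA := hG.a_three_pos hβ
  have hB : (2 : ℝ) ≤ β := by exact_mod_cast hG.two_le hβ
  have hB0 : (β : ℝ) ≠ 0 := by linarith
  have hB1 : (β : ℝ) - 1 ≠ 0 := by linarith
  have hA1 : (a 3 : ℝ) + 1 ≠ 0 := by linarith
  have hA0 := hA.ne'
  apply hG.drg.isEigenfun_dist <;> simp only [shillaSeq, p1, p2, p3, p4, hG.valency hβ]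
  · field_simp
  · field_simp
    ring
  · rw [shillaQuad] at hP
    field_simp
    linear_combination (β * a 3 - θ) * hP
  · field_simp
    ring

lemma IsShilla.isEigenfun_shillaSeqA (hG : IsShilla G b c a) (hβ : a 3 = a 1 + β) (x : V) :
    IsEigenfun G (a 3) (fun z => shillaSeqA β (b 2) (c 2) (G.dist x z)) := by
  obtain ⟨p1, p2, p3, p4⟩ := hG.params hβ
  have hB : (2 : ℝ) ≤ β := by exact_mod_cast hG.two_le hβ
  have hB0 : (β : ℝ) ≠ 0 := by linarith
  have hb2 : (b 2 : ℝ) ≠ 0 := by exact_mod_cast (hG.drg.b_pos (i := 2) le_rfl).ne'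
  apply hG.drg.isEigenfun_dist <;> simp only [shillaSeqA, p1, p2, p3, p4, hG.valency hβ]
  · field_simp
  · field_simp
    ring
  · field_simp
    ring
  · ring

lemma IsShilla.gram_shillaSeq (hG : IsShilla G b c a) (hβ : a 3 = a 1 + β)
    (hP : shillaQuad β (a 3) (b 2) (c 2) θ = 0) (hθ : θ ≠ a 3) (x y : V) :
    ∑ z, shillaSeq β (a 3) θ (G.dist x z) * shillaSeq β (a 3) θ (G.dist y z) =
      (1 + θ ^ 2 / (β * a 3)
        + ((θ - a 3) * (θ + β)) ^ 2 / (c 2 * (a 3 * β * (β - 1) * (a 3 + 1)))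
        + b 2 * (θ + β) ^ 2 / (c 2 * (β * (a 3 + 1)))) * shillaSeq β (a 3) θ (G.dist x y) := by
  have hw := hG.isEigenfun_shillaSeq hβ hP y
  rw [hG.drg.sum_dist_mul_eq (fun z => shillaSeq β (a 3) θ (G.dist y z))
    (shillaSeq β (a 3) θ) x, hG.drg.sphereSum_zero, hG.sphereSum_three hβ hw hθ,
    (hG.sphereSum_eq hβ hw x).1, (hG.sphereSum_eq hβ hw x).2, G.dist_comm (u := y)]
  rw [shillaSeq.eq_1, shillaSeq.eq_2, shillaSeq.eq_3,
    show shillaSeq β (a 3) θ 3 = (θ + β) / (β * (a 3 + 1)) from rfl]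
  simp only [div_eq_mul_inv, mul_inv]
  ring

lemma IsShilla.gram_shillaSeqA (hG : IsShilla G b c a) (hβ : a 3 = a 1 + β) (x y : V) :
    ∑ z, shillaSeqA β (b 2) (c 2) (G.dist x z) * shillaSeqA β (b 2) (c 2) (G.dist y z) =
      (1 + a 3 / β + c 2 * (a 3 + 1) / (β * b 2)) * shillaSeqA β (b 2) (c 2) (G.dist x y) := by
  have hw := hG.isEigenfun_shillaSeqA hβ y
  rw [hG.drg.sum_dist_mul_eq (fun z => shillaSeqA β (b 2) (c 2) (G.dist y z))
    (shillaSeqA β (b 2) (c 2)) x, hG.drg.sphereSum_zero, (hG.sphereSum_three_a hβ hw x).1,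
    (hG.sphereSum_three_a hβ hw x).2,
    (hG.sphereSum_eq hβ hw x).1, G.dist_comm (u := y)]
  rw [shillaSeqA.eq_1, shillaSeqA.eq_2, shillaSeqA.eq_3,
    show shillaSeqA β (b 2) (c 2) 3 = - c 2 / (β * b 2) from rfl]
  ring

/-- The Krein condition `q³₁₁ ≥ 0` of a Shilla graph. -/
lemma IsShilla.krein (hG : IsShilla G b c a) (hβ : a 3 = a 1 + β) (hθ : IsEig G θ)
    (ha : θ ≠ a 3) : 0 ≤ β * (β * b 2 + c 2) + θ * (b 2 + c 2) := by
  obtain ⟨w, hw0, hw⟩ := isEig_iff_exists_isEigenfun.1 hθ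
  obtain ⟨x, hx⟩ := Function.ne_iff.1 hw0
  have hA := hG.a_three_pos hβ
  have hB : (0 : ℝ) < β := by exact_mod_cast lt_of_lt_of_le two_pos (hG.two_le hβ)
  have hb2 : (0 : ℝ) < b 2 := by exact_mod_cast (hG.drg.b_pos (i := 2) le_rfl)
  have hc2 : (0 : ℝ) < c 2 := by exact_mod_cast hG.drg.c_pos (i := 1) (by norm_num)
  have h1 := quadForm_sq_nonneg_of_gram (by positivity) (hG.gram_shillaSeqA hβ) w
  have h2 : ∀ x, ∑ y, w x * w y * shillaSeqA β (b 2) (c 2) (G.dist x y) ^ 2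
      = w x ^ 2 * ((β * (β * b 2 + c 2) + θ * (b 2 + c 2)) / (β ^ 2 * b 2)) := by
    intro x
    have := hG.drg.sum_dist_mul_eq w (fun i => shillaSeqA β (b 2) (c 2) i ^ 2) x
    rw [hG.drg.sphereSum_zero, hG.sphereSum_three hβ hw ha, (hG.sphereSum_eq hβ hw x).1] at this
    simp_rw [mul_assoc, ← Finset.mul_sum, mul_comm (w _) (_ ^ 2), this]
    rw [shillaSeqA.eq_1, shillaSeqA.eq_2, shillaSeqA.eq_3,
      show shillaSeqA β (b 2) (c 2) 3 = - c 2 / (β * b 2) from rfl]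
    field_simp
    ring
  simp_rw [h2, ← Finset.sum_mul] at h1
  have h3 : 0 < ∑ x, w x ^ 2 := Finset.sum_pos' (fun _ _ => sq_nonneg _)
    ⟨x, Finset.mem_univ _, by simpa using sq_pos_of_ne_zero hx⟩
  have h4 := nonneg_of_mul_nonneg_right h1 h3
  have h5 : 0 < (β : ℝ) ^ 2 * b 2 := by positivity
  have := mul_nonneg h4 h5.le
  rwa [div_mul_cancel₀ _ h5.ne'] at this

end

section

variable {V : Type*} [Fintype V] [DecidableEq V] {G : SimpleGraph V} [DecidableRel G.Adj]
  {b c a : ℕ → ℕ}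

omit [DecidableEq V] in
lemma IsDRG.sum_adj (h : IsDRG G 3 b c a) (x : V) :
    ∑ y, (if G.Adj x y then (1 : ℝ) else 0) = b 0 := by
  rw [h.sum_neighbors (fun _ => 1) x x]
  simp [h.c_zero, h.a_zero]

omit [DecidableEq V] in
lemma IsDRG.sum_adj_adj (h : IsDRG G 3 b c a) {x y : V} (hxy : G.Adj x y) :
    ∑ z, (if G.Adj x z ∧ G.Adj y z then (1 : ℝ) else 0) = a 1 := by
  rw [← h.card_a 1 (by norm_num) x y (SimpleGraph.dist_eq_one_iff_adj.2 hxy),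
    natCast_card_setOf_eq_sum]
  simp only [SimpleGraph.dist_eq_one_iff_adj, and_comm]

omit [DecidableEq V] in
lemma IsDRG.sum_adj_dist_two (h : IsDRG G 3 b c a) {x z : V} (hxz : G.Adj x z) :
    ∑ w, (if G.Adj x w ∧ G.dist z w = 2 then (1 : ℝ) else 0) = b 1 := by
  rw [← h.card_b 1 (by norm_num) z x (SimpleGraph.dist_eq_one_iff_adj.2 hxz.symm),
    natCast_card_setOf_eq_sum]

/-- Two vertices of the local graph at `x` at distance two have at most `c 2 - 1` common
neighbours in that local graph. -/
lemma IsDRG.sum_adj_adj_adj_le (h : IsDRG G 3 b c a) {x z w : V} (hxz : G.Adj x z)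
    (hxw : G.Adj x w) (hzw : G.dist z w = 2) :
    ∑ y, (if G.Adj x y ∧ G.Adj y z ∧ G.Adj y w then (1 : ℝ) else 0) ≤ c 2 - 1 := by
  have h1 : ∑ y, (if y = x then (1 : ℝ) else 0) = 1 := by simp
  rw [← h.card_c 2 (by norm_num) z w hzw, natCast_card_setOf_eq_sum, le_sub_iff_add_le]
  nth_rw 2 [← h1]
  rw [← Finset.sum_add_distrib]
  refine Finset.sum_le_sum fun y _ => ?_
  simp only [show G.dist z y = 2 - 1 ↔ G.Adj z y from SimpleGraph.dist_eq_one_iff_adj]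
  by_cases hy : y = x
  · subst hy
    simp [hxz.symm, hxw.symm]
  · simp only [hy, if_false, add_zero]
    by_cases hc : G.Adj x y ∧ G.Adj y z ∧ G.Adj y w
    · simp [hc, hc.2.1.symm, hc.2.2.symm]
    · rw [if_neg hc]
      positivity

lemma sum_sum_mul_add_single (N : V → ℝ) (U : V → V → ℝ) (hU : ∀ z w, U z w = U w z) (x y : V) :
    ∑ z, ∑ w, (N z + (if z = x then 1 else 0) + (if z = y then 1 else 0)) *
        (N w + (if w = x then 1 else 0) + (if w = y then 1 else 0)) * U z w =
      ∑ z, ∑ w, N z * N w * U z w + 2 * ∑ z, N z * U x z + 2 * ∑ z, N z * U y z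
        + U x x + U y y + 2 * U x y := by
  simp only [add_mul, mul_add, Finset.sum_add_distrib, ite_mul, mul_ite, mul_one, mul_zero,
    zero_mul, one_mul, Finset.sum_ite_eq', Finset.mem_univ, if_true, Finset.sum_ite_irrel,
    Finset.sum_const_zero]
  have h : ∀ x, ∑ z, N z * U z x = ∑ z, N z * U x z := fun x =>
    Finset.sum_congr rfl fun z _ => by rw [hU z x]
  rw [hU y x, h x, h y]
  ring

/-- Positive semidefiniteness of a Gram matrix of the form `u (dist x y)`, averaged over the
vectors supported on the closed triangles at an edge of a fixed vertex. -/
lemma IsDRG.local_inequality (h : IsDRG G 3 b c a) {u : ℕ → ℝ} {l : ℝ} (hl : 0 < l)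
    (hE : ∀ x y, ∑ z, u (G.dist x z) * u (G.dist y z) = l * u (G.dist x y)) (h0 : u 0 = 1)
    (h12 : u 1 ≤ u 2) :
    0 ≤ a 1 + u 1 * a 1 * (a 1 - 1) + (u 2 - u 1) * (c 2 - 1) * b 1 + 4 * a 1 * u 1
      + 2 * (1 + u 1) := by
  obtain ⟨x, -⟩ := h.exists_diam
  have hk : (0 : ℝ) < b 0 := by exact_mod_cast h.b_pos (i := 0) (by norm_num)
  set e : V → V → ℝ := fun y z => if G.Adj y z then 1 else 0 with he
  set M : V → V → ℝ := fun z w => ∑ y, e x y * e y z * e y w with hM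
  have hee : ∀ y z y' z', e y z * e y' z' = if G.Adj y z ∧ G.Adj y' z' then 1 else 0 := by
    intro y z y' z'
    simp only [he, ite_and]
    split_ifs <;> simp
  have hM' : ∀ z w, M z w = ∑ y, (if G.Adj x y ∧ G.Adj y z ∧ G.Adj y w then (1 : ℝ) else 0) := by
    intro z w
    refine Finset.sum_congr rfl fun y _ => ?_
    simp only [he, ite_and]
    split_ifs <;> simp
  have hsum : ∀ y, G.Adj x y → ∑ z, e x z * e y z = a 1 := by
    intro y hy
    simp only [hee]
    exact h.sum_adj_adj hy
  have hQ : ∀ y, 0 ≤ e x y * (∑ z, ∑ w, (e x z * e y z) * (e x w * e y w) * u (G.dist z w)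
      + 4 * a 1 * u 1 + 2 * (1 + u 1)) := by
    intro y
    by_cases hy : G.Adj x y
    · have h1 := quadForm_nonneg_of_gram (E := fun z w => u (G.dist z w)) hl hE
        (fun z => e x z * e y z + (if z = x then 1 else 0) + (if z = y then 1 else 0))
      have h2 := sum_sum_mul_add_single (fun z => e x z * e y z) (fun z w => u (G.dist z w))
        (fun z w => by rw [G.dist_comm]) x y
      rw [h2] at h1
      have h3 : ∑ z, e x z * e y z * u (G.dist x z) = a 1 * u 1 := by
        rw [← hsum y hy, Finset.sum_mul]
        refine Finset.sum_congr rfl fun z _ => ?_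
        by_cases hz : G.Adj x z
        · rw [SimpleGraph.dist_eq_one_iff_adj.2 hz]
        · simp [he, hz]
      have h4 : ∑ z, e x z * e y z * u (G.dist y z) = a 1 * u 1 := by
        rw [← hsum y hy, Finset.sum_mul]
        refine Finset.sum_congr rfl fun z _ => ?_
        by_cases hz : G.Adj y z
        · rw [SimpleGraph.dist_eq_one_iff_adj.2 hz]
        · simp [he, hz]
      rw [h3, h4, SimpleGraph.dist_self, SimpleGraph.dist_self, h0,
        SimpleGraph.dist_eq_one_iff_adj.2 hy] at h1
      have h5 : e x y = 1 := if_pos hy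
      rw [h5]
      linarith
    · simp [he, hy]
  have hQs := Finset.sum_nonneg fun y (_ : y ∈ Finset.univ) => hQ y
  have hk' : ∑ y, e x y = b 0 := h.sum_adj x
  have hswap : ∀ f : V → V → ℝ, ∑ y, e x y * ∑ z, ∑ w, (e x z * e y z) * (e x w * e y w) * f z w
      = ∑ z, ∑ w, e x z * e x w * (M z w * f z w) := by
    intro f
    simp only [hM, Finset.mul_sum, Finset.sum_mul]
    rw [Finset.sum_comm]
    refine Finset.sum_congr rfl fun z _ => ?_
    rw [Finset.sum_comm]
    exact Finset.sum_congr rfl fun w _ => Finset.sum_congr rfl fun y _ => by ring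
  have hbound : ∀ z w, e x z * e x w * (M z w * u (G.dist z w)) ≤
      e x z * e x w * (M z w * u 1) + (1 - u 1) * a 1 * (e x z * (if w = z then 1 else 0))
        + (u 2 - u 1) * (c 2 - 1) * (e x z * (if G.Adj x w ∧ G.dist z w = 2 then 1 else 0)) := by
    intro z w
    by_cases hz : G.Adj x z
    swap
    · simp [he, hz]
    have hez : e x z = 1 := if_pos hz
    by_cases hw : G.Adj x w
    swap
    · have hwz : w ≠ z := fun hwz => hw (hwz ▸ hz)
      simp [he, hw, hwz]
    have hew : e x w = 1 := if_pos hw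
    have hd : G.dist z w ≤ 2 := by
      have h1 := h.connected.dist_triangle (u := z) (v := x) (w := w)
      rw [SimpleGraph.dist_eq_one_iff_adj.2 hw, SimpleGraph.dist_eq_one_iff_adj.2 hz.symm] at h1
      exact h1
    rw [hez, hew]
    obtain hd0 | hd1 | hd2 : G.dist z w = 0 ∨ G.dist z w = 1 ∨ G.dist z w = 2 := by omega
    · obtain rfl := h.connected.dist_eq_zero_iff.1 hd0
      have : M z z = a 1 := by
        rw [hM', ← h.sum_adj_adj hz]
        simp [G.adj_comm]
      simp [this, h0]
      linarith
    · have hwz : w ≠ z := by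
        rintro rfl
        simp at hd1
      simp [hd1, hwz]
    · have hwz : w ≠ z := by
        rintro rfl
        simp at hd2
      have := h.sum_adj_adj_adj_le hz hw hd2
      rw [← hM'] at this
      simp [hd2, hwz, hw]
      nlinarith
  have hone := hswap (fun _ _ => u 1)
  have hM1 : ∑ y, e x y * ∑ z, ∑ w, (e x z * e y z) * (e x w * e y w) * u 1
      = b 0 * (a 1 * a 1 * u 1) := by
    rw [← hk', Finset.sum_mul]
    refine Finset.sum_congr rfl fun y _ => ?_
    by_cases hy : G.Adj x y
    · rw [← hsum y hy, Finset.sum_mul_sum, Finset.sum_mul]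
      simp_rw [Finset.sum_mul]
    · simp [he, hy]
  have htwo : ∑ z, ∑ w, e x z * (if G.Adj x w ∧ G.dist z w = 2 then 1 else 0) = b 0 * b 1 := by
    rw [← hk', Finset.sum_mul]
    refine Finset.sum_congr rfl fun z _ => ?_
    rw [← Finset.mul_sum]
    by_cases hz : G.Adj x z
    · rw [h.sum_adj_dist_two hz]
    · simp [he, hz]
  have hsle := Finset.sum_le_sum fun z (_ : z ∈ Finset.univ) =>
    Finset.sum_le_sum fun w (_ : w ∈ Finset.univ) => hbound z w
  simp only [Finset.sum_add_distrib] at hsle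
  rw [← hone, hM1] at hsle
  simp only [← Finset.mul_sum] at hsle htwo
  rw [htwo] at hsle
  simp only [Finset.sum_ite_eq', Finset.mem_univ, if_true, mul_one, hk'] at hsle
  simp only [mul_add, Finset.sum_add_distrib, ← Finset.sum_mul, hk'] at hQs
  have := hswap (fun z w => u (G.dist z w))
  simp only [Finset.mul_sum] at this hsle hQs
  rw [this] at hQs
  refine (mul_nonneg_iff_of_pos_left hk).1 ?_
  linarith
end

section

variable {V : Type*} [Fintype V] [DecidableEq V] {G : SimpleGraph V} [DecidableRel G.Adj]
  {b c a : ℕ → ℕ} {β : ℕ} {θ : ℝ}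

lemma shillaQuad_exists_root_lt {β A b2 c2 : ℝ} (hβ : 1 < β) (hc2 : 0 < c2) :
    ∃ r < -β, shillaQuad β A b2 c2 r = 0 := by
  set s := A - β - b2 - c2 with hs
  set d := s ^ 2 - 4 * (β * b2 + c2 - β * A) with hd
  have hlt : (s + 2 * β) ^ 2 < d := by nlinarith [mul_pos (sub_pos.2 hβ) hc2]
  have hd0 : 0 ≤ d := (sq_nonneg _).trans hlt.le
  refine ⟨(s - √d) / 2, ?_, ?_⟩
  · linarith [Real.lt_sqrt_of_sq_lt hlt]
  · rw [shillaQuad]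
    linear_combination (1 / 4) * Real.sq_sqrt hd0 + ((s - √d) / 2) * hs + (1 / 4) * hd

lemma IsShilla.smallestEig_lt (hG : IsShilla G b c a) (hβ : a 3 = a 1 + β)
    (hθ : IsSmallestEig G θ) : θ < -β := by
  have hB : (2 : ℝ) ≤ β := by exact_mod_cast hG.two_le hβ
  have hc2 : (0 : ℝ) < c 2 := by exact_mod_cast hG.drg.c_pos (i := 1) (by norm_num)
  obtain ⟨r, hr, hr0⟩ := shillaQuad_exists_root_lt (β := β) (A := a 3) (b2 := b 2)
    (by linarith) hc2
  obtain ⟨x, -⟩ := hG.drg.exists_diam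
  refine (hθ.2 r (isEig_iff_exists_isEigenfun.2 ⟨_, fun h => ?_,
    hG.isEigenfun_shillaSeq hβ hr0 x⟩)).trans_lt hr
  have := congrFun h x
  simp [shillaSeq] at this

lemma IsShilla.exists_mul_eq_card (hG : IsShilla G b c a) (hβ : a 3 = a 1 + β)
    (hP : shillaQuad β (a 3) (b 2) (c 2) θ = 0) (hθ : θ ≠ a 3) :
    ∃ m n : ℕ, m ≠ 0 ∧
      m * (1 + θ ^ 2 / (β * a 3)
        + ((θ - a 3) * (θ + β)) ^ 2 / (c 2 * (a 3 * β * (β - 1) * (a 3 + 1)))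
        + b 2 * (θ + β) ^ 2 / (c 2 * (β * (a 3 + 1)))) = n := by
  have hA := hG.a_three_pos hβ
  have hB : (2 : ℝ) ≤ β := by exact_mod_cast hG.two_le hβ
  have hB1 : (0 : ℝ) < β - 1 := by linarith
  obtain ⟨x, -⟩ := hG.drg.exists_diam
  have : Nonempty V := ⟨x⟩
  obtain ⟨m, hm⟩ := Matrix.exists_trace_eq_natCast_mul
    (Matrix.of fun x y => shillaSeq β (a 3) θ (G.dist x y))
    (l := 1 + θ ^ 2 / (β * a 3)
        + ((θ - a 3) * (θ + β)) ^ 2 / (c 2 * (a 3 * β * (β - 1) * (a 3 + 1)))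
        + b 2 * (θ + β) ^ 2 / (c 2 * (β * (a 3 + 1)))) (by positivity) (by
      ext x y
      rw [Matrix.mul_apply, Matrix.smul_apply, Matrix.of_apply, smul_eq_mul,
        ← hG.gram_shillaSeq hβ hP hθ]
      exact Finset.sum_congr rfl fun z _ => by
        rw [Matrix.of_apply, Matrix.of_apply, G.dist_comm (u := z)])
  have ht : (Matrix.of fun x y => shillaSeq β (a 3) θ (G.dist x y)).trace = Fintype.card V := by
    simp [Matrix.trace, shillaSeq]
  rw [ht] at hm
  refine ⟨m, Fintype.card V, ?_, hm.symm⟩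
  rintro rfl
  simp at hm

lemma Irrational.eq_zero_of_intCast_mul_eq {x : ℝ} (hx : Irrational x) {m n : ℤ}
    (h : m * x = n) : m = 0 := by
  by_contra hm
  exact (hx.intCast_mul hm).ne_int n h

/-- Conjugacy of an irrational root of the quadratic of a Shilla graph with the other root. -/
lemma IsShilla.eq_of_irrational (hG : IsShilla G b c a) (hβ : a 3 = a 1 + β)
    (hP : shillaQuad β (a 3) (b 2) (c 2) θ = 0) (hθ : Irrational θ) {S δ : ℤ}
    (hS : S = b 2 + c 2) (hδ : S = a 3 + β - δ) :
    δ * (S ^ 2 + (β - 1) * a 3 * S + (β - 1) * c 2) =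
      2 * (β - 1) * c 2 * (S + β * a 3 + β) := by
  obtain ⟨m, n, hm, h⟩ := hG.exists_mul_eq_card hβ hP (hθ.ne_nat _)
  have hA := (hG.a_three_pos hβ).ne'
  have hB : (2 : ℝ) ≤ β := by exact_mod_cast hG.two_le hβ
  have hB0 : (β : ℝ) ≠ 0 := by linarith
  have hB1 : (β : ℝ) - 1 ≠ 0 := by linarith
  have hA1 : (a 3 : ℝ) + 1 ≠ 0 := by positivity
  have hc2 : (c 2 : ℝ) ≠ 0 := by exact_mod_cast (hG.drg.c_pos (i := 1) (by norm_num)).ne'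
  field_simp at h
  rw [shillaQuad] at hP
  obtain ⟨T, hT⟩ : ∃ T : ℤ, T = c 2 + β * b 2 := ⟨_, rfl⟩
  obtain ⟨s, hs⟩ : ∃ s : ℤ, s = a 3 - β - S := ⟨_, rfl⟩
  obtain ⟨p, hp⟩ : ∃ p : ℤ, p = T - β * a 3 := ⟨_, rfl⟩
  have hS' : (S : ℝ) = b 2 + c 2 := by exact_mod_cast hS
  have hT' : (T : ℝ) = c 2 + β * b 2 := by rw [hT]; push_cast; rfl
  have hs' : (s : ℝ) = a 3 - β - S := by rw [hs]; push_cast; rfl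
  have hp' : (p : ℝ) = T - β * a 3 := by rw [hp]; push_cast; rfl
  have h1 : (θ - a 3) * (θ + β) = -(S * θ + T) := by rw [hS', hT']; linear_combination hP
  have h2 : θ ^ 2 = s * θ - p := by rw [hs', hp']; linear_combination h1
  have key : ((β : ℝ) - 1) * (a 3 + 1) * c 2 * θ ^ 2 + ((θ - a 3) * (θ + β)) ^ 2
        + (β - 1) * a 3 * b 2 * (θ + β) ^ 2 =
      ((β - 1) * (a 3 + 1) * c 2 * s + S ^ 2 * s + 2 * S * T
        + (β - 1) * a 3 * b 2 * (s + 2 * β)) * θ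
      - (β - 1) * (a 3 + 1) * c 2 * p - S ^ 2 * p + T ^ 2
      + (β - 1) * a 3 * b 2 * (β ^ 2 - p) := by
    rw [h1]
    linear_combination (((β : ℝ) - 1) * (a 3 + 1) * c 2 + S ^ 2 + (β - 1) * a 3 * b 2) * h2
  have h0 := hθ.eq_zero_of_intCast_mul_eq
    (m := m * ((β - 1) * (a 3 + 1) * c 2 * s + S ^ 2 * s + 2 * S * T
      + (β - 1) * a 3 * b 2 * (s + 2 * β)))
    (n := n * (a 3 * β * (β - 1) * (a 3 + 1) * c 2) - m * (a 3 * β * (β - 1) * (a 3 + 1) * c 2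
      - (β - 1) * (a 3 + 1) * c 2 * p - S ^ 2 * p + T ^ 2
      + (β - 1) * a 3 * b 2 * (β ^ 2 - p)))
    (by
      push_cast
      linear_combination h - m * key)
  have h3 := (mul_eq_zero.1 h0).resolve_left (by exact_mod_cast hm)
  have hb2 : (b 2 : ℤ) = S - c 2 := by linarith
  have ha3 : (a 3 : ℤ) = S - β + δ := by linarith
  rw [hs, hT, hb2, ha3] at h3
  rw [ha3]
  linear_combination h3

end

section

variable {V : Type*} [Fintype V] [DecidableEq V] {G : SimpleGraph V} [DecidableRel G.Adj]
  {b c a : ℕ → ℕ} {β : ℕ} {θ : ℝ}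

lemma exists_int_eq_of_sq_eq {r : ℚ} {s p : ℤ} (h : r ^ 2 = s * r - p) : ∃ n : ℤ, r = n := by
  have hr : IsIntegral ℤ r := by
    refine ⟨Polynomial.X ^ 2 + (-Polynomial.C s * Polynomial.X + Polynomial.C p), ?_, ?_⟩
    · monicity!
    · simp only [Polynomial.eval₂_add, Polynomial.eval₂_mul, Polynomial.eval₂_neg,
        Polynomial.eval₂_pow, Polynomial.eval₂_X, Polynomial.eval₂_C, eq_intCast (algebraMap ℤ ℚ)]
      linear_combination h
  obtain ⟨n, hn⟩ := IsIntegrallyClosed.isIntegral_iff.1 hr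
  exact ⟨n, by simpa using hn.symm⟩

lemma exists_int_eq_of_shillaQuad_eq_zero (hP : shillaQuad β (a 3) (b 2) (c 2) θ = 0)
    (hθ : ¬ Irrational θ) : ∃ n : ℤ, θ = n := by
  rw [Irrational, not_not] at hθ
  obtain ⟨r, rfl⟩ := hθ
  obtain ⟨n, hn⟩ := exists_int_eq_of_sq_eq (r := r) (s := a 3 - β - b 2 - c 2)
    (p := β * b 2 + c 2 - β * a 3) (by
      rw [shillaQuad] at hP
      have : (r : ℝ) ^ 2 = (a 3 - β - b 2 - c 2) * r - (β * b 2 + c 2 - β * a 3) := by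
        linear_combination hP
      push_cast
      exact_mod_cast this)
  exact ⟨n, by rw [hn, Rat.cast_intCast]⟩

lemma IsShilla.ne_one_sub_sq (hG : IsShilla G b c a) (hβ : a 3 = a 1 + β) (h3 : 3 ≤ β)
    (hθ : IsEig G θ) : θ ≠ 1 - β ^ 2 := by
  rintro rfl
  have hB : (3 : ℝ) ≤ β := by exact_mod_cast h3
  have hB0 : (0 : ℝ) < β := by linarith
  have hB1 : (0 : ℝ) < β - 1 := by linarith
  have hA := hG.a_three_pos hβ
  have hc2 : (0 : ℝ) < c 2 := by exact_mod_cast hG.drg.c_pos (i := 1) (by norm_num)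
  have hneg : 1 - (β : ℝ) ^ 2 < 0 := by nlinarith
  have ha : 1 - (β : ℝ) ^ 2 ≠ a 3 := by linarith
  have hP := hG.shillaQuad_eq_zero hβ hθ (by rw [hG.valency hβ]; nlinarith) ha
  have hK := hG.krein hβ hθ ha
  rw [shillaQuad] at hP
  have hPz : ((β : ℤ) ^ 2 - β - 1) * (β ^ 2 - β - 1 + (β + a 3 - b 2 - c 2)) =
      (β - 1) * c 2 := by
    have : ((β : ℝ) ^ 2 - β - 1) * (β ^ 2 - β - 1 + (β + a 3 - b 2 - c 2)) =
      (β - 1) * c 2 := by linear_combination hP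
    exact_mod_cast this
  obtain ⟨t, ht⟩ : (β : ℤ) ^ 2 - β - 1 ∣ (c 2 : ℤ) :=
    IsCoprime.dvd_of_dvd_mul_left
      (show IsCoprime ((β : ℤ) ^ 2 - β - 1) ((β : ℤ) - 1) from ⟨-1, β, by ring⟩) ⟨_, hPz.symm⟩
  have ht' : (c 2 : ℝ) = (β ^ 2 - β - 1) * t := by exact_mod_cast ht
  have hq : (0 : ℝ) < β ^ 2 - β - 1 := by nlinarith
  have ht1 : (1 : ℝ) ≤ t := by
    have : (0 : ℝ) < t := by
      rw [ht'] at hc2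
      exact (mul_pos_iff_of_pos_left hq).1 hc2
    exact_mod_cast this
  have hδ : (β : ℝ) ^ 2 - β - 1 + (β + a 3 - b 2 - c 2) = (β - 1) * t := by
    refine mul_left_cancel₀ hq.ne' ?_
    rw [ht'] at hP ⊢
    linear_combination hP
  have hlow : (t : ℝ) * ((β ^ 2 - β - 1) ^ 2 + β ^ 2 - 2) - β ^ 2 + 1 ≤ a 3 := by
    rw [ht'] at hK hδ
    linarith
  have hloc := hG.drg.local_inequality (u := shillaSeq β (a 3) (1 - β ^ 2)) (by positivity)
    (hG.gram_shillaSeq hβ hP ha) rfl (by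
      rw [shillaSeq.eq_2, shillaSeq.eq_3]
      refine (div_nonpos_of_nonpos_of_nonneg hneg.le (by positivity)).trans
        (div_nonneg (mul_nonneg_of_nonpos_of_nonpos ?_ ?_) (by positivity)) <;> linarith)
  obtain ⟨p1, p2, -, -⟩ := hG.params hβ
  rw [shillaSeq.eq_2, shillaSeq.eq_3, p1, p2] at hloc
  have := local_form_neg hB ht1 hlow
  refine this.not_ge ?_
  have hmul := mul_nonneg (mul_pos hB0 hA).le hloc
  refine hmul.trans_eq ?_
  rw [ht']
  field_simp
  ring

lemma IsShilla.not_lt (hG : IsShilla G b c a) (hβ : a 3 = a 1 + β) (h3 : 3 ≤ β)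
    (hθ : IsEig G θ) : ¬ θ < -(β : ℝ) ^ 2 + 2 := by
  intro hlt
  have hB : (3 : ℝ) ≤ β := by exact_mod_cast h3
  have hA := hG.a_three_pos hβ
  have hBA : (β : ℝ) ≤ a 3 := by exact_mod_cast hβ ▸ Nat.le_add_left _ _
  have hc2 : (0 : ℝ) < c 2 := by exact_mod_cast hG.drg.c_pos (i := 1) (by norm_num)
  have hb2 : (0 : ℝ) < b 2 := by exact_mod_cast (hG.drg.b_pos (i := 2) le_rfl)
  have hneg : θ < 0 := by nlinarith
  have ha : θ ≠ a 3 := by linarith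
  have hP := hG.shillaQuad_eq_zero hβ hθ (by rw [hG.valency hβ]; nlinarith) ha
  have hK := hG.krein hβ hθ ha
  by_cases hirr : Irrational θ
  · have hI := hG.eq_of_irrational hβ hP hirr (S := b 2 + c 2)
      (δ := a 3 + β - (b 2 + c 2)) rfl (by ring)
    rw [shillaQuad] at hP
    refine shilla_irrational_contradiction (b := β) (a := a 3) (c2 := c 2) (S := b 2 + c 2)
      (δ := a 3 + β - (b 2 + c 2)) (y := -θ - β) (by exact_mod_cast h3) (by exact_mod_cast hBA)
      (by exact_mod_cast hc2) (by exact_mod_cast add_pos hb2 hc2) (by ring) ?_ ?_ ?_ hI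
    all_goals push_cast
    · linarith
    · linear_combination hP
    · linarith
  · obtain ⟨n, rfl⟩ := exists_int_eq_of_shillaQuad_eq_zero hP hirr
    refine hG.ne_one_sub_sq hβ h3 hθ ?_
    have h1 : n < -(β : ℤ) ^ 2 + 2 := by exact_mod_cast hlt
    have h2 : -(β : ℝ) ^ 2 < n := by
      have hS := add_pos hb2 hc2
      by_contra! h
      nlinarith [mul_le_mul_of_nonneg_right h hS.le,
        mul_pos hc2 (show (0 : ℝ) < β * (β - 1) by nlinarith)]
    have h2' : -(β : ℤ) ^ 2 < n := by exact_mod_cast h2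
    have : n = 1 - (β : ℤ) ^ 2 := by omega
    rw [this]
    push_cast
    ring

end

/-- For a Shilla distance-regular graph with `b = b(Γ)` and smallest eigenvalue `θ₃`:
`θ₃ < -b² + 2` if and only if `b = 2`. -/
theorem stmt18 {V : Type*} [Fintype V] [DecidableEq V] (G : SimpleGraph V)
    [DecidableRel G.Adj] (b c a : ℕ → ℕ) (hG : IsShilla G b c a)
    (β : ℕ) (hβ : a 3 = a 1 + β)
    (θ3 : ℝ) (h3 : IsSmallestEig G θ3) :
    θ3 < -(β : ℝ) ^ 2 + 2 ↔ β = 2 := by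
  constructor
  · intro hlt
    by_contra hne
    have := hG.two_le hβ
    exact hG.not_lt hβ (by omega) h3.1 hlt
  · rintro rfl
    have := hG.smallestEig_lt hβ h3
    norm_num at this ⊢
    exact this
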